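/- arXiv:1708.06012 — 6 statements merged into one kernel-verified Lean document; each statement's English description precedes it below -/
import Mathlib

section
/- Let F be a field, μ ≥ 1, let e_1, …, e_{μ+1} be pairwise distinct nonzero elements of F, c ≥ 0 an integer, and let Ψ be the (μ+1) × μ generalized Vandermonde matrix with entries Ψ_{i,j} = e_i^{c+j−1}. If D is a symmetric μ × μ matrix over F such that Ψ D Ψ^T is a diagonal matrix, then D = 0. -/
open Matrix

/-- The generalized Vandermonde matrix with offset `c`: entries `A i j = e i ^ (c + j)`
(0-indexed; this corresponds to `A_{i,j} = e_i^{c+j-1}` with 1-based indexing). -/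
def genVandermonde {F : Type*} [Field F] (m ℓ : ℕ) (e : Fin m → F) (c : ℕ) :
    Matrix (Fin m) (Fin ℓ) F :=
  Matrix.of fun i j => e i ^ (c + j.val)

theorem aux_zero {F : Type*} [Field F] (μ c : ℕ) (e : Fin (μ + 1) → F) (he : ∀ i, e i ≠ 0)
    (hinj : Function.Injective e) (f : Fin μ → F) (i : Fin (μ + 1))
    (h : ∀ j, j ≠ i → ∑ k, f k * e j ^ (c + k.val) = 0) : f = 0 := by
  apply Matrix.eq_zero_of_forall_index_sum_mul_pow_eq_zero (f := e ∘ i.succAbove)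
    (hinj.comp i.succAbove_right_injective)
  intro j
  have h1 := h (i.succAbove j) (Fin.succAbove_ne i j)
  have h2 : e (i.succAbove j) ^ c * ∑ k, f k * e (i.succAbove j) ^ k.val = 0 := by
    rw [← h1, Finset.mul_sum]
    refine Finset.sum_congr rfl fun k _ => ?_
    rw [pow_add]; ring
  exact (mul_eq_zero.mp h2).resolve_left (pow_ne_zero _ (he _))

/-- if `Ψ` is the `(μ+1) × μ` generalized Vandermonde matrix built from
pairwise distinct nonzero elements, `D` is a symmetric `μ × μ` matrix, and `Ψ * D * Ψᵀ`
is a diagonal matrix, then `D = 0`. -/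
theorem symm_conj_genVandermonde_isDiag_eq_zero {F : Type*} [Field F] (μ : ℕ) (hμ : 1 ≤ μ)
    (c : ℕ) (e : Fin (μ + 1) → F) (he : ∀ i, e i ≠ 0) (hinj : Function.Injective e)
    (D : Matrix (Fin μ) (Fin μ) F) (hD : D.IsSymm)
    (hdiag : (genVandermonde (μ + 1) μ e c * D * (genVandermonde (μ + 1) μ e c)ᵀ).IsDiag) :
    D = 0 := by
  have h1 : genVandermonde (μ + 1) μ e c * D = 0 := by
    ext i k
    have := aux_zero μ c e he hinj ((genVandermonde (μ + 1) μ e c * D) i) i (by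
      intro j hj
      have h := hdiag (Ne.symm hj)
      beta_reduce at h
      rw [Matrix.mul_apply] at h
      exact h)
    exact congrFun this k
  ext k l
  have := aux_zero μ c e he hinj (fun k => D k l) 0 (by
    intro j _
    have h := congrFun (congrFun h1 j) l
    rw [Matrix.mul_apply] at h
    rw [← show _ = (0 : F) from h]
    exact Finset.sum_congr rfl fun k _ => mul_comm _ _)
  exact congrFun this k
end

section
/- Let F be a field, μ ≥ 1, let Ψ be a (μ+1) × μ generalized Vandermonde matrix (entries Ψ_{i,j} = e_i^{c+j−1} for pairwise distinct nonzero e_1, …, e_{μ+1} in F and an integer c ≥ 0), and let Δ be a (μ+1) × (μ+1) diagonal matrix whose diagonal entries are nonzero and pairwise distinct. If A, B, A′, B′ are symmetric μ × μ matrices over F satisfying Ψ A + Δ Ψ B = Ψ A′ + Δ Ψ B′, then A = A′ and B = B′. (Equivalently: the equation X = Ψ A + Δ Ψ B can be solved uniquely for unknown symmetric μ × μ matrices A and B.) -/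
open Matrix

theorem gv_key {F : Type*} [Field F] (μ : ℕ) (c : ℕ) (e : Fin (μ + 1) → F) (he : ∀ i, e i ≠ 0)
    (hinj : Function.Injective e) (i : Fin (μ + 1)) (v : Fin μ → F)
    (hv : ∀ j, j ≠ i → ∑ k, v k * e j ^ (c + k.val) = 0) : v = 0 := by
  apply Matrix.eq_zero_of_forall_index_sum_mul_pow_eq_zero
    (f := fun j => e (i.succAbove j)) (hinj.comp Fin.succAbove_right_injective)
  intro j
  have h := hv (i.succAbove j) (Fin.succAbove_ne i j)
  have h2 : e (i.succAbove j) ^ c * ∑ k, v k * e (i.succAbove j) ^ k.val = 0 := by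
    rw [← h, Finset.mul_sum]
    refine Finset.sum_congr rfl fun k _ => ?_
    rw [pow_add]; ring
  exact (mul_eq_zero.mp h2).resolve_left (pow_ne_zero _ (he _))

theorem gv_symm_zero {F : Type*} [Field F] (μ : ℕ) (c : ℕ) (e : Fin (μ + 1) → F)
    (he : ∀ i, e i ≠ 0) (hinj : Function.Injective e) (T : Matrix (Fin μ) (Fin μ) F)
    (hT : T.IsSymm)
    (hQ : ∀ i j, i ≠ j →
      (genVandermonde (μ + 1) μ e c * T * (genVandermonde (μ + 1) μ e c)ᵀ) i j = 0) : T = 0 := by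
  have h1 : ∀ i, (genVandermonde (μ + 1) μ e c * T) i = 0 := by
    intro i
    apply gv_key μ c e he hinj i
    intro j hj
    have := hQ i j hj.symm
    rw [Matrix.mul_apply] at this
    simpa [genVandermonde] using this
  ext a b
  have h2 : T.col b = 0 := by
    apply gv_key μ c e he hinj 0
    intro j _
    have := congrFun (h1 j) b
    rw [Matrix.mul_apply] at this
    simpa [genVandermonde, mul_comm] using this
  exact congrFun h2 a

/-- let `Ψ` be a `(μ+1) × μ` generalized Vandermonde matrix (pairwise
distinct nonzero `e i`, offset `c ≥ 0`) and let `Δ` be a diagonal `(μ+1) × (μ+1)` matrix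
with nonzero pairwise distinct diagonal entries.  If symmetric `μ × μ` matrices
`A, B, A', B'` satisfy `Ψ A + Δ Ψ B = Ψ A' + Δ Ψ B'`, then `A = A'` and `B = B'`,
i.e. `X = Ψ A + Δ Ψ B` is uniquely solvable for symmetric `A`, `B`. -/
theorem genVandermonde_diag_unique_solve {F : Type*} [Field F] (μ : ℕ) (hμ : 1 ≤ μ)
    (c : ℕ) (e : Fin (μ + 1) → F) (he : ∀ i, e i ≠ 0) (hinj : Function.Injective e)
    (δ : Fin (μ + 1) → F) (hδ0 : ∀ i, δ i ≠ 0) (hδinj : Function.Injective δ)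
    (A B A' B' : Matrix (Fin μ) (Fin μ) F)
    (hA : A.IsSymm) (hB : B.IsSymm) (hA' : A'.IsSymm) (hB' : B'.IsSymm)
    (h : genVandermonde (μ + 1) μ e c * A + Matrix.diagonal δ * genVandermonde (μ + 1) μ e c * B
        = genVandermonde (μ + 1) μ e c * A' + Matrix.diagonal δ * genVandermonde (μ + 1) μ e c * B') :
    A = A' ∧ B = B' := by
  set Ψ := genVandermonde (μ + 1) μ e c with hΨ
  have hS : (A - A').IsSymm := hA.sub hA'
  have hT : (B - B').IsSymm := hB.sub hB'
  have h0 : Ψ * (A - A') + Matrix.diagonal δ * (Ψ * (B - B')) = 0 := by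
    rw [← Matrix.mul_assoc, Matrix.mul_sub, Matrix.mul_sub, sub_add_sub_comm, h, sub_self]
  have h1 : ∀ i j, (Ψ * (A - A') * Ψᵀ) i j + δ i * (Ψ * (B - B') * Ψᵀ) i j = 0 := by
    intro i j
    have h2 : (Ψ * (A - A') + Matrix.diagonal δ * (Ψ * (B - B'))) * Ψᵀ = 0 := by
      rw [h0, Matrix.zero_mul]
    rw [Matrix.add_mul, Matrix.mul_assoc (Matrix.diagonal δ)] at h2
    have h3 := congrFun (congrFun h2 i) j
    rwa [Matrix.add_apply, Matrix.diagonal_mul] at h3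
  have hsym : ∀ M : Matrix (Fin μ) (Fin μ) F, M.IsSymm → ∀ i j,
      (Ψ * M * Ψᵀ) i j = (Ψ * M * Ψᵀ) j i := by
    intro M hM i j
    have : (Ψ * M * Ψᵀ)ᵀ = Ψ * M * Ψᵀ := by
      rw [Matrix.transpose_mul, Matrix.transpose_mul, Matrix.transpose_transpose, hM.eq,
        Matrix.mul_assoc]
    exact congrFun (congrFun this j) i
  have hQ : ∀ i j, i ≠ j → (Ψ * (B - B') * Ψᵀ) i j = 0 := by
    intro i j hij
    have e1 := h1 i j
    have e2 := h1 j i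
    rw [hsym _ hS j i, hsym _ hT j i] at e2
    have e3 : (δ i - δ j) * (Ψ * (B - B') * Ψᵀ) i j = 0 := by linear_combination e1 - e2
    exact (mul_eq_zero.mp e3).resolve_left (sub_ne_zero.mpr (hδinj.ne hij))
  have hP : ∀ i j, i ≠ j → (Ψ * (A - A') * Ψᵀ) i j = 0 := by
    intro i j hij
    have e1 := h1 i j
    rwa [hQ i j hij, mul_zero, add_zero] at e1
  exact ⟨sub_eq_zero.mp (gv_symm_zero μ c e he hinj _ hS hP),
    sub_eq_zero.mp (gv_symm_zero μ c e he hinj _ hT hQ)⟩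
end

section
/- Let F be a field, μ ≥ 1, z ≥ 1, n ≥ 1, with pairwise distinct nonzero elements e_1, …, e_n of F, and let M be the data matrix built from symmetric μ × μ matrices S_1, …, S_{2z}. Let m ≥ 1 divide z, set d = (m+1)μ, let f be a node index and H = {ℓ_1, …, ℓ_d} a set of d node indices. Then the d × 1 column vector Υ_H(1) whose entry for helper ℓ is the repair symbol r_1(ℓ, f) satisfies Υ_H(1) = Ω_H(1) · N · (ψ_f(1))^T, where N is the d × mμ matrix whose top mμ rows form the submatrix M_1 of M and whose bottom μ rows are the block row [O, …, O, S_{2m}] consisting of (m−1) μ × μ zero blocks followed by S_{2m}. -/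
open Matrix Finset

section ProductMatrixBAMSR

variable {F : Type*} [Field F]

/-- The data matrix `M` of the bandwidth adaptive product-matrix MSR code:
a `((z+1)μ) × (zμ)` matrix built from a (1-indexed) family `S 1, …, S (2z)` of `μ × μ`
matrices, with `μ × μ` blocks `B(t,t) = S (2t-1)` for `1 ≤ t ≤ z`,
`B(t,t+1) = S (2t)` for `1 ≤ t ≤ z-1`, `B(t+1,t) = S (2t)` for `1 ≤ t ≤ z`, and all
other blocks zero. -/
def dataMatrix (z μ : ℕ) (hμ : 0 < μ) (S : ℕ → Matrix (Fin μ) (Fin μ) F) :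
    Matrix (Fin ((z + 1) * μ)) (Fin (z * μ)) F :=
  Matrix.of fun r c =>
    if r.val / μ = c.val / μ then
      S (2 * (c.val / μ) + 1) ⟨r.val % μ, Nat.mod_lt _ hμ⟩ ⟨c.val % μ, Nat.mod_lt _ hμ⟩
    else if r.val / μ + 1 = c.val / μ then
      S (2 * (r.val / μ) + 2) ⟨r.val % μ, Nat.mod_lt _ hμ⟩ ⟨c.val % μ, Nat.mod_lt _ hμ⟩
    else if r.val / μ = c.val / μ + 1 then
      S (2 * (c.val / μ) + 2) ⟨r.val % μ, Nat.mod_lt _ hμ⟩ ⟨c.val % μ, Nat.mod_lt _ hμ⟩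
    else 0

/-- Coefficient (row) vector of a node with evaluation point `e`:
`ψ = (e, e², …, e^{(z+1)μ})`. -/
def psiVec (z μ : ℕ) (e : F) : Fin ((z + 1) * μ) → F := fun r => e ^ (r.val + 1)

/-- Stored content of a node with evaluation point `e`: the row vector `x = ψ M`
of length `α = zμ`. -/
def stored (z μ : ℕ) (hμ : 0 < μ) (S : ℕ → Matrix (Fin μ) (Fin μ) F) (e : F) :
    Fin (z * μ) → F :=
  Matrix.vecMul (psiVec z μ e) (dataMatrix z μ hμ S)

/-- The row vector `φ = (e, e², …, e^μ)`. -/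
def phiVec (μ : ℕ) (e : F) : Fin μ → F := fun a => e ^ (a.val + 1)

/-- The `i`-th (1-indexed) length-`mμ` segment of the coefficient vector `ψ`:
`ψ(i) = (e^{(i-1)mμ+1}, …, e^{imμ})`. -/
def psiSeg (m μ i : ℕ) (e : F) : Fin (m * μ) → F :=
  fun a => e ^ ((i - 1) * (m * μ) + a.val + 1)

lemma seg_bound {z μ m i : ℕ} (hμ : 0 < μ) (hm : 0 < m) (hi1 : 1 ≤ i)
    (hiz : i ≤ z / m) (hdvd : m ∣ z) {a : ℕ} (ha : a < m * μ) :
    (i - 1) * (m * μ) + a < z * μ := by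
  obtain ⟨t, rfl⟩ := hdvd
  rw [Nat.mul_div_cancel_left t hm] at hiz
  obtain ⟨i', rfl⟩ := Nat.exists_eq_add_of_le hi1
  have h2 : (1 + i' - 1) * (m * μ) + m * μ = (1 + i') * (m * μ) := by
    have : 1 + i' - 1 = i' := by omega
    rw [this]; ring
  have h3 : (1 + i') * (m * μ) ≤ m * t * μ := by
    have hit : (1 + i') * m ≤ m * t := by nlinarith
    calc (1 + i') * (m * μ) = (1 + i') * m * μ := by ring
      _ ≤ m * t * μ := Nat.mul_le_mul_right _ hit
  omega

/-- The `i`-th (1-indexed) length-`mμ` segment of the stored content `x = ψ M`. -/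
def xSeg (z μ m i : ℕ) (hμ : 0 < μ) (hm : 0 < m) (hi1 : 1 ≤ i) (hiz : i ≤ z / m)
    (hdvd : m ∣ z) (S : ℕ → Matrix (Fin μ) (Fin μ) F) (e : F) : Fin (m * μ) → F :=
  fun a => stored z μ hμ S e ⟨(i - 1) * (m * μ) + a.val, seg_bound hμ hm hi1 hiz hdvd a.isLt⟩

/-- The repair symbol `r_i(h, f) = x_h(i) · (ψ_f(i))ᵀ` sent by a helper with evaluation
point `eh` for a failed node with evaluation point `ef`. -/
def repairSym (z μ m i : ℕ) (hμ : 0 < μ) (hm : 0 < m) (hi1 : 1 ≤ i) (hiz : i ≤ z / m)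
    (hdvd : m ∣ z) (S : ℕ → Matrix (Fin μ) (Fin μ) F) (eh ef : F) : F :=
  ∑ a, xSeg z μ m i hμ hm hi1 hiz hdvd S eh a * psiSeg m μ i ef a

/-- The `i`-th (1-indexed) diagonal `mμ × mμ` submatrix `M_i` of the data matrix,
consisting of rows and columns `(i-1)mμ+1, …, imμ`. -/
def subM (z μ m i : ℕ) (hμ : 0 < μ) (hm : 0 < m) (hi1 : 1 ≤ i) (hiz : i ≤ z / m)
    (hdvd : m ∣ z) (S : ℕ → Matrix (Fin μ) (Fin μ) F) :
    Matrix (Fin (m * μ)) (Fin (m * μ)) F :=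
  Matrix.of fun a b =>
    dataMatrix z μ hμ S
      ⟨(i - 1) * (m * μ) + a.val,
        lt_of_lt_of_le (seg_bound hμ hm hi1 hiz hdvd a.isLt)
          (Nat.mul_le_mul_right _ (Nat.le_succ z))⟩
      ⟨(i - 1) * (m * μ) + b.val, seg_bound hμ hm hi1 hiz hdvd b.isLt⟩

/-- The `d × d` matrix `Ω_H(i)` (with `d = (m+1)μ`) whose row for helper `ℓ r` is
`(e_{ℓ r}^{(i-1)mμ+1}, …, e_{ℓ r}^{(i-1)mμ+d})`, i.e. `[ψ_{ℓ r}(i), e_{ℓ r}^{imμ} φ_{ℓ r}]`. -/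
def OmegaMat (n μ m i : ℕ) (e : Fin n → F) (ℓ : Fin ((m + 1) * μ) → Fin n) :
    Matrix (Fin ((m + 1) * μ)) (Fin ((m + 1) * μ)) F :=
  Matrix.of fun r c => e (ℓ r) ^ ((i - 1) * (m * μ) + c.val + 1)

lemma nmat_aux1 {m μ r : ℕ} (h : r < (m + 1) * μ) (h2 : ¬ r < m * μ) : r - m * μ < μ := by
  have hh : (m + 1) * μ = m * μ + μ := by ring
  omega

lemma nmat_aux2 {m μ c : ℕ} (hm : 0 < m) (h : c < m * μ) (h2 : (m - 1) * μ ≤ c) :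
    c - (m - 1) * μ < μ := by
  have h3 : (m - 1) * μ + μ = m * μ := by
    cases m with
    | zero => omega
    | succ k => rw [Nat.succ_sub_one, Nat.succ_mul]
  omega

/-- The `d × mμ` matrix `N_i` whose top `mμ` rows form the matrix `Mi` and whose bottom
`μ` rows form the block row `[O, …, O, S₂]` of `m-1` zero `μ × μ` blocks followed by `S₂`. -/
def Nmat (μ m : ℕ) (hm : 0 < m) (Mi : Matrix (Fin (m * μ)) (Fin (m * μ)) F)
    (S2 : Matrix (Fin μ) (Fin μ) F) : Matrix (Fin ((m + 1) * μ)) (Fin (m * μ)) F :=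
  Matrix.of fun r c =>
    if h : r.val < m * μ then Mi ⟨r.val, h⟩ c
    else if h2 : (m - 1) * μ ≤ c.val then
      S2 ⟨r.val - m * μ, nmat_aux1 r.isLt h⟩ ⟨c.val - (m - 1) * μ, nmat_aux2 hm c.isLt h2⟩
    else 0

/-- The top `(d-μ) × d = mμ × d` submatrix `Θ` of a `d × d` matrix (`d = (m+1)μ`). -/
def ThetaMat (μ m : ℕ) (A : Matrix (Fin ((m + 1) * μ)) (Fin ((m + 1) * μ)) F) :
    Matrix (Fin (m * μ)) (Fin ((m + 1) * μ)) F :=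
  Matrix.of fun r c =>
    A ⟨r.val, lt_of_lt_of_le r.isLt (Nat.mul_le_mul_right _ (Nat.le_succ m))⟩ c

/-- The bottom `μ × d` submatrix `Ξ` of a `d × d` matrix (`d = (m+1)μ`). -/
def XiMat (μ m : ℕ) (A : Matrix (Fin ((m + 1) * μ)) (Fin ((m + 1) * μ)) F) :
    Matrix (Fin μ) (Fin ((m + 1) * μ)) F :=
  Matrix.of fun r c =>
    A ⟨m * μ + r.val, by
      have hh : (m + 1) * μ = m * μ + μ := by ring
      have hr := r.isLt
      omega⟩ c

end ProductMatrixBAMSR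


lemma Nmat_eq_aux {F : Type*} [Field F] (μ z m : ℕ) (hμ : 0 < μ)
    (hm : 0 < m) (hdvd : m ∣ z) (hmz : (m + 1) * μ ≤ (z + 1) * μ) (hmz' : m * μ ≤ z * μ)
    (S : ℕ → Matrix (Fin μ) (Fin μ) F) (h1z : 1 ≤ z / m)
    (r : Fin ((m + 1) * μ)) (c : Fin (m * μ)) :
    Nmat μ m hm (subM z μ m 1 hμ hm (le_refl 1) h1z hdvd S) (S (2 * m)) r c
      = dataMatrix z μ hμ S (Fin.castLE hmz r) (Fin.castLE hmz' c) := by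
  unfold Nmat
  rw [Matrix.of_apply]
  split_ifs with h h2
  · unfold subM
    rw [Matrix.of_apply]
    congr 1 <;> ext <;> simp
  · obtain ⟨k, rfl⟩ : ∃ k, m = k + 1 := ⟨m - 1, by omega⟩
    have hr : r.val / μ = k + 1 := by
      apply Nat.div_eq_of_lt_le
      · omega
      · exact r.isLt
    have hc : c.val / μ = k := by
      apply Nat.div_eq_of_lt_le
      · simpa using h2
      · exact c.isLt
    have hr' : r.val % μ = r.val - (k + 1) * μ := by
      rw [Nat.mod_eq_sub_div_mul, hr]
    have hc' : c.val % μ = c.val - (k + 1 - 1) * μ := by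
      rw [Nat.mod_eq_sub_div_mul, hc]; simp
    unfold dataMatrix
    simp only [Matrix.of_apply, Fin.val_castLE, hr, hc, hr', hc']
    rw [if_neg (by omega), if_neg (by omega), if_pos trivial]
    rfl
  · have hr : r.val / μ = m := by
      apply Nat.div_eq_of_lt_le
      · omega
      · exact r.isLt
    have hc : c.val / μ < m - 1 := by
      rw [Nat.div_lt_iff_lt_mul hμ]; omega
    unfold dataMatrix
    simp only [Matrix.of_apply, Fin.val_castLE, hr]
    rw [if_neg (by omega), if_neg (by omega), if_neg (by omega)]

/-- with `d = (m+1)μ`, failed node `f` and helper set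
`H = {ℓ 0, …, ℓ (d-1)}`, the `d × 1` column vector `Υ_H(1)` of first repair symbols
`r₁(ℓ, f)` satisfies `Υ_H(1) = Ω_H(1) ⬝ N ⬝ (ψ_f(1))ᵀ`, where `N` is the `d × mμ` matrix
whose top `mμ` rows form `M₁` and whose bottom `μ` rows form `[O, …, O, S_{2m}]`. -/
theorem repair_vector_eq_step1 {F : Type*} [Field F] (μ z m n : ℕ) (hμ : 0 < μ)
    (hz : 0 < z) (hm : 0 < m) (hdvd : m ∣ z) (hn : 0 < n)
    (e : Fin n → F) (he : ∀ j, e j ≠ 0) (heinj : Function.Injective e)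
    (S : ℕ → Matrix (Fin μ) (Fin μ) F) (hS : ∀ t, 1 ≤ t → t ≤ 2 * z → (S t).IsSymm)
    (f : Fin n) (ℓ : Fin ((m + 1) * μ) → Fin n) (hℓ : Function.Injective ℓ)
    (h1z : 1 ≤ z / m) :
    (fun r : Fin ((m + 1) * μ) =>
        repairSym z μ m 1 hμ hm (le_refl 1) h1z hdvd S (e (ℓ r)) (e f))
      = Matrix.mulVec
          (OmegaMat n μ m 1 e ℓ *
            Nmat μ m hm (subM z μ m 1 hμ hm (le_refl 1) h1z hdvd S) (S (2 * m)))
          (psiSeg m μ 1 (e f)) := by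
  have hle : m ≤ z := Nat.le_of_dvd hz hdvd
  have hmz : (m + 1) * μ ≤ (z + 1) * μ := Nat.mul_le_mul_right _ (by omega)
  have hmz' : m * μ ≤ z * μ := Nat.mul_le_mul_right _ hle
  funext r
  unfold repairSym Matrix.mulVec dotProduct
  refine Finset.sum_congr rfl fun c _ => ?_
  congr 1
  beta_reduce
  rw [Matrix.mul_apply]
  have hx : xSeg z μ m 1 hμ hm (le_refl 1) h1z hdvd S (e (ℓ r)) c
      = ∑ j, psiVec z μ (e (ℓ r)) j * dataMatrix z μ hμ S j (Fin.castLE hmz' c) := by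
    have hcc : (⟨(1 - 1) * (m * μ) + c.val,
        seg_bound hμ hm (le_refl 1) h1z hdvd c.isLt⟩ : Fin (z * μ)) = Fin.castLE hmz' c := by
      ext; simp
    unfold xSeg stored
    rw [hcc]
    rfl
  rw [hx]
  symm
  apply Fintype.sum_of_injective (Fin.castLE hmz) (Fin.castLE_injective hmz)
  · intro j hj
    have hj' : (m + 1) * μ ≤ j.val := by
      by_contra hlt
      exact hj ⟨⟨j.val, by omega⟩, by ext; simp⟩
    have hjd : m + 1 ≤ j.val / μ := (Nat.le_div_iff_mul_le hμ).2 hj'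
    have hc : c.val / μ < m := (Nat.div_lt_iff_lt_mul hμ).2 c.isLt
    unfold dataMatrix
    simp only [Matrix.of_apply, Fin.val_castLE]
    rw [if_neg (by omega), if_neg (by omega), if_neg (by omega), mul_zero]
  · intro j
    rw [Nmat_eq_aux μ z m hμ hm hdvd hmz hmz' S h1z]
    simp [OmegaMat, psiVec]
end

section
/- In the setting of the repair procedure with m ∣ z, d = (m+1)μ, failed node f and helper set H = {ℓ_1, …, ℓ_d} of pairwise distinct node indices with pairwise distinct nonzero e_{ℓ_1}, …, e_{ℓ_d}: partition (Ω_H(1))^{−1} = [Θ; Ξ] where Θ is the top (d−μ) × d submatrix and Ξ the bottom μ × d submatrix, and let Υ_H(1) be the d × 1 column vector of repair symbols r_1(ℓ, f), ℓ ∈ H. Then M_1 (ψ_f(1))^T = Θ Υ_H(1), S_{2m} (e_f^{(m−1)μ} φ_f)^T = Ξ Υ_H(1), and consequently the first mμ entries of the failed node's content satisfy x_f(1) = ψ_f(1) M_1 + [0, …, 0, e_f^{mμ} φ_f S_{2m}], where the zero padding has length (m−1)μ. -/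
open Matrix Finset

def GG {F : Type*} [Field F] (μ : ℕ) (hμ : 0 < μ) (S : ℕ → Matrix (Fin μ) (Fin μ) F)
    (r c : ℕ) : F :=
    if r / μ = c / μ then
      S (2 * (c / μ) + 1) ⟨r % μ, Nat.mod_lt _ hμ⟩ ⟨c % μ, Nat.mod_lt _ hμ⟩
    else if r / μ + 1 = c / μ then
      S (2 * (r / μ) + 2) ⟨r % μ, Nat.mod_lt _ hμ⟩ ⟨c % μ, Nat.mod_lt _ hμ⟩
    else if r / μ = c / μ + 1 then
      S (2 * (c / μ) + 2) ⟨r % μ, Nat.mod_lt _ hμ⟩ ⟨c % μ, Nat.mod_lt _ hμ⟩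
    else 0

lemma GG_zero {F : Type*} [Field F] (μ : ℕ) (hμ : 0 < μ) (S : ℕ → Matrix (Fin μ) (Fin μ) F)
    (q r c : ℕ) (hc : c < q * μ) (hr : (q + 1) * μ ≤ r) : GG μ hμ S r c = 0 := by
  have h1 : c / μ < q := (Nat.div_lt_iff_lt_mul hμ).2 hc
  have h2 : q + 1 ≤ r / μ := (Nat.le_div_iff_mul_le hμ).2 hr
  unfold GG
  rw [if_neg (by omega), if_neg (by omega), if_neg (by omega)]

lemma GG_block {F : Type*} [Field F] (μ : ℕ) (hμ : 0 < μ) (S : ℕ → Matrix (Fin μ) (Fin μ) F)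
    (q : ℕ) (k j : Fin μ) :
    GG μ hμ S ((q + 1) * μ + k) (q * μ + j) = S (2 * (q + 1)) k j := by
  have h1 : ((q + 1) * μ + (k : ℕ)) / μ = q + 1 := by
    rw [mul_comm, Nat.mul_add_div hμ, Nat.div_eq_of_lt k.isLt, add_zero]
  have h2 : (q * μ + (j : ℕ)) / μ = q := by
    rw [mul_comm, Nat.mul_add_div hμ, Nat.div_eq_of_lt j.isLt, add_zero]
  have h3 : ((q + 1) * μ + (k : ℕ)) % μ = k := by
    rw [mul_comm, Nat.mul_add_mod, Nat.mod_eq_of_lt k.isLt]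
  have h4 : (q * μ + (j : ℕ)) % μ = j := by
    rw [mul_comm, Nat.mul_add_mod, Nat.mod_eq_of_lt j.isLt]
  unfold GG
  simp only [h1, h2, h3, h4]
  rw [if_neg (by omega), if_neg (by omega), if_pos trivial]
  rfl

lemma xSeg_eq {F : Type*} [Field F] (μ z m : ℕ) (hμ : 0 < μ) (hm : 0 < m) (hdvd : m ∣ z)
    (h1 : 1 ≤ 1) (h1z : 1 ≤ z / m) (S : ℕ → Matrix (Fin μ) (Fin μ) F) (x : F)
    (a : Fin (m * μ)) :
    xSeg z μ m 1 hμ hm h1 h1z hdvd S x a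
      = ∑ r ∈ range ((m + 1) * μ), x ^ (r + 1) * GG μ hμ S r a := by
  have hmz : m ≤ z := by
    have := (Nat.le_div_iff_mul_le hm).1 h1z
    omega
  have e1 : xSeg z μ m 1 hμ hm h1 h1z hdvd S x a
      = ∑ r : Fin ((z + 1) * μ), x ^ ((r : ℕ) + 1) * GG μ hμ S r a := by
    simp [xSeg, stored, Matrix.vecMul, dotProduct, psiVec, dataMatrix, GG]
  rw [e1, Fin.sum_univ_eq_sum_range (fun r => x ^ (r + 1) * GG μ hμ S r a)]
  symm
  apply Finset.sum_subset
  · intro r hr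
    have : (m + 1) * μ ≤ (z + 1) * μ := Nat.mul_le_mul_right _ (by omega)
    simp only [Finset.mem_range] at *
    omega
  · intro r _ hr
    rw [GG_zero μ hμ S m r a a.isLt (by simpa using hr), mul_zero]

lemma subM_eq {F : Type*} [Field F] (μ z m : ℕ) (hμ : 0 < μ) (hm : 0 < m) (hdvd : m ∣ z)
    (h1 : 1 ≤ 1) (h1z : 1 ≤ z / m) (S : ℕ → Matrix (Fin μ) (Fin μ) F)
    (a b : Fin (m * μ)) :
    subM z μ m 1 hμ hm h1 h1z hdvd S a b = GG μ hμ S a b := by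
  simp [subM, dataMatrix, GG]

lemma Omega_det {F : Type*} [Field F] (n μ m : ℕ) (e : Fin n → F) (he : ∀ j, e j ≠ 0)
    (heinj : Function.Injective e) (ℓ : Fin ((m + 1) * μ) → Fin n)
    (hℓ : Function.Injective ℓ) : IsUnit (OmegaMat n μ m 1 e ℓ).det := by
  have : OmegaMat n μ m 1 e ℓ
      = Matrix.diagonal (fun r => e (ℓ r)) * Matrix.vandermonde (fun r => e (ℓ r)) := by
    ext r c
    simp [OmegaMat, Matrix.diagonal_mul, Matrix.vandermonde, pow_succ, mul_comm]
  rw [this, Matrix.det_mul, Matrix.det_diagonal, isUnit_iff_ne_zero]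
  exact mul_ne_zero (Finset.prod_ne_zero_iff.2 fun r _ => he _)
    (Matrix.det_vandermonde_ne_zero_iff.2 (heinj.comp hℓ))

/-- in the repair of node `f` from `d = (m+1)μ` helpers, writing
`(Ω_H(1))⁻¹ = [Θ; Ξ]` with `Θ` the top `(d-μ) × d` and `Ξ` the bottom `μ × d` submatrix,
and `Υ_H(1)` for the column vector of first repair symbols, we have
`M₁ (ψ_f(1))ᵀ = Θ Υ_H(1)`, `S_{2m} (e_f^{(m-1)μ} φ_f)ᵀ = Ξ Υ_H(1)`, and consequently
`x_f(1) = ψ_f(1) M₁ + [0, …, 0, e_f^{mμ} φ_f S_{2m}]` (zero padding of length `(m-1)μ`). -/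
theorem repair_decode_step1 {F : Type*} [Field F] (μ z m n : ℕ) (hμ : 0 < μ)
    (hz : 0 < z) (hm : 0 < m) (hdvd : m ∣ z) (hn : 0 < n)
    (e : Fin n → F) (he : ∀ j, e j ≠ 0) (heinj : Function.Injective e)
    (S : ℕ → Matrix (Fin μ) (Fin μ) F) (hS : ∀ t, 1 ≤ t → t ≤ 2 * z → (S t).IsSymm)
    (f : Fin n) (ℓ : Fin ((m + 1) * μ) → Fin n) (hℓ : Function.Injective ℓ)
    (hℓf : ∀ r, ℓ r ≠ f) :
    let h1z : 1 ≤ z / m := (Nat.one_le_div_iff hm).mpr (Nat.le_of_dvd hz hdvd)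
    let Υ : Fin ((m + 1) * μ) → F := fun r =>
      repairSym z μ m 1 hμ hm (le_refl 1) h1z hdvd S (e (ℓ r)) (e f)
    (Matrix.mulVec (subM z μ m 1 hμ hm (le_refl 1) h1z hdvd S) (psiSeg m μ 1 (e f))
        = Matrix.mulVec (ThetaMat μ m (OmegaMat n μ m 1 e ℓ)⁻¹) Υ)
    ∧ (Matrix.mulVec (S (2 * m)) (fun a => e f ^ ((m - 1) * μ) * phiVec μ (e f) a)
        = Matrix.mulVec (XiMat μ m (OmegaMat n μ m 1 e ℓ)⁻¹) Υ)
    ∧ (∀ a : Fin (m * μ),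
        xSeg z μ m 1 hμ hm (le_refl 1) h1z hdvd S (e f) a
          = Matrix.vecMul (psiSeg m μ 1 (e f)) (subM z μ m 1 hμ hm (le_refl 1) h1z hdvd S) a
            + if h2 : (m - 1) * μ ≤ a.val then
                e f ^ (m * μ) *
                  Matrix.vecMul (phiVec μ (e f)) (S (2 * m))
                    ⟨a.val - (m - 1) * μ, nmat_aux2 hm a.isLt h2⟩
              else 0) := by
  intro h1z Υ
  let v : Fin ((m + 1) * μ) → F := fun r =>
    ∑ c : Fin (m * μ), GG μ hμ S r c * e f ^ ((c : ℕ) + 1)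
  have hΥ : Υ = (OmegaMat n μ m 1 e ℓ) *ᵥ v := by
    funext r
    simp only [Υ, v, repairSym, xSeg_eq, Matrix.mulVec, dotProduct, OmegaMat, psiSeg,
      Matrix.of_apply, Nat.sub_self, zero_mul, zero_add]
    simp only [Finset.sum_range, Finset.sum_mul, Finset.mul_sum]
    rw [Finset.sum_comm]
    simp only [mul_assoc]
  have hv : (OmegaMat n μ m 1 e ℓ)⁻¹ *ᵥ Υ = v := by
    rw [hΥ, Matrix.mulVec_mulVec, Matrix.nonsing_inv_mul _ (Omega_det n μ m e he heinj ℓ hℓ),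
      Matrix.one_mulVec]
  refine ⟨?_, ?_, ?_⟩
  · funext a
    trans v ⟨a.val, lt_of_lt_of_le a.isLt (Nat.mul_le_mul_right _ (Nat.le_succ m))⟩
    · simp only [Matrix.mulVec, dotProduct, subM_eq, v, psiSeg, Nat.sub_self, zero_mul, zero_add]
    · rw [← hv]; rfl
  · funext k
    trans v ⟨m * μ + k.val, by
      have hh : (m + 1) * μ = m * μ + μ := by ring
      have hr := k.isLt
      omega⟩
    · obtain ⟨q, rfl⟩ : ∃ q, m = q + 1 := ⟨m - 1, by omega⟩
      simp only [v]
      rw [Fin.sum_univ_eq_sum_range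
        (fun c => GG μ hμ S ((q + 1) * μ + k) c * e f ^ (c + 1)),
        show (q + 1) * μ = q * μ + μ by ring, Finset.sum_range_add, Finset.sum_eq_zero, zero_add,
        Finset.sum_range]
      · simp only [Matrix.mulVec, dotProduct, phiVec, Nat.add_sub_cancel]
        refine Finset.sum_congr rfl fun j _ => ?_
        have := GG_block μ hμ S q k j
        rw [show (q + 1) * μ = q * μ + μ by ring] at this
        rw [this]
        ring
      · intro c hc
        rw [GG_zero μ hμ S q _ c (by simpa using hc) (by rw [add_mul]; omega), zero_mul]
    · rw [← hv]; rfl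
  · intro a
    rw [xSeg_eq, show (m + 1) * μ = m * μ + μ by ring, Finset.sum_range_add]
    congr 1
    · simp only [Matrix.vecMul, dotProduct, subM_eq, psiSeg, Nat.sub_self, zero_mul, zero_add]
      rw [Finset.sum_range]
    · obtain ⟨q, rfl⟩ : ∃ q, m = q + 1 := ⟨m - 1, by omega⟩
      split_ifs with h2
      · rw [Finset.sum_range]
        simp only [Matrix.vecMul, dotProduct, phiVec, Finset.mul_sum]
        refine Finset.sum_congr rfl fun k _ => ?_
        rw [← GG_block μ hμ S q k]
        simp only [Nat.add_sub_cancel] at h2 ⊢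
        rw [Nat.add_sub_cancel' h2]
        ring
      · refine Finset.sum_eq_zero fun k _ => ?_
        rw [GG_zero μ hμ S q _ a (by simpa using h2) (by omega), mul_zero]
end

section
/- In the setting of the repair procedure with m ∣ z, d = (m+1)μ, β = z/m, failed node f and helper set H = {ℓ_1, …, ℓ_d}: for every 2 ≤ i ≤ β, the d × 1 column vector Υ_H(i) of repair symbols r_i(ℓ, f), ℓ ∈ H, satisfies Υ_H(i) − W_i · S_{2(i−1)m} · (e_f^{(i−1)mμ} φ_f)^T = Ω_H(i) · N_i · (ψ_f(i))^T, where W_i is the d × μ matrix whose row for helper ℓ is e_ℓ^{(i−1)mμ−μ} φ_ℓ, and N_i is the d × mμ matrix whose top mμ rows form the submatrix M_i of M and whose bottom μ rows are the block row [O, …, O, S_{2im}] consisting of (m−1) μ × μ zero blocks followed by S_{2im}. -/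
open Matrix Finset

section Aux
variable {F : Type*} [Field F]

def auxD (μ : ℕ) (hμ : 0 < μ) (S : ℕ → Matrix (Fin μ) (Fin μ) F) (r c : ℕ) : F :=
    if r / μ = c / μ then
      S (2 * (c / μ) + 1) ⟨r % μ, Nat.mod_lt _ hμ⟩ ⟨c % μ, Nat.mod_lt _ hμ⟩
    else if r / μ + 1 = c / μ then
      S (2 * (r / μ) + 2) ⟨r % μ, Nat.mod_lt _ hμ⟩ ⟨c % μ, Nat.mod_lt _ hμ⟩
    else if r / μ = c / μ + 1 then
      S (2 * (c / μ) + 2) ⟨r % μ, Nat.mod_lt _ hμ⟩ ⟨c % μ, Nat.mod_lt _ hμ⟩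
    else 0

lemma auxD_up (μ : ℕ) (hμ : 0 < μ) (S : ℕ → Matrix (Fin μ) (Fin μ) F) (p c a : ℕ)
    (hc : c < μ) :
    auxD μ hμ S (p * μ + c) ((p + 1) * μ + a) =
      if h : a < μ then S (2 * (p + 1)) ⟨c, hc⟩ ⟨a, h⟩ else 0 := by
  have h1 : (p * μ + c) / μ = p := by
    rw [Nat.add_comm, Nat.add_mul_div_right _ _ hμ, Nat.div_eq_of_lt hc, zero_add]
  have h2 : ((p + 1) * μ + a) / μ = p + 1 + a / μ := by
    rw [Nat.add_comm, Nat.add_mul_div_right _ _ hμ, Nat.add_comm]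
  have h3 : (p * μ + c) % μ = c := by
    rw [Nat.add_comm, Nat.add_mul_mod_self_right, Nat.mod_eq_of_lt hc]
  have h4 : ((p + 1) * μ + a) % μ = a % μ := by
    rw [Nat.add_comm, Nat.add_mul_mod_self_right]
  unfold auxD
  simp only [h1, h2, h3, h4]
  have h0 : 0 ≤ a / μ := Nat.zero_le _
  have hz : a < μ ↔ a / μ = 0 := by rw [Nat.div_eq_zero_iff]; omega
  clear h2
  generalize a / μ = w at *
  rw [if_neg (by omega)]
  by_cases h6 : a < μ
  · rw [if_pos (by rw [hz.1 h6]), dif_pos h6]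
    simp only [Nat.mod_eq_of_lt h6]; rfl
  · have : w ≠ 0 := fun h => h6 (hz.2 h)
    rw [if_neg (by omega), if_neg (by omega), dif_neg h6]

lemma auxD_low (μ : ℕ) (hμ : 0 < μ) (S : ℕ → Matrix (Fin μ) (Fin μ) F) (p r a : ℕ)
    (hr : r < p * μ) : auxD μ hμ S r ((p + 1) * μ + a) = 0 := by
  have h1 : r / μ < p := (Nat.div_lt_iff_lt_mul hμ).2 hr
  have h2 : ((p + 1) * μ + a) / μ = p + 1 + a / μ := by
    rw [Nat.add_comm, Nat.add_mul_div_right _ _ hμ, Nat.add_comm]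
  unfold auxD
  rw [h2]
  clear h2
  generalize a / μ = w at *
  generalize r / μ = v at *
  rw [if_neg (by omega), if_neg (by omega), if_neg (by omega)]

lemma auxD_high (μ : ℕ) (hμ : 0 < μ) (S : ℕ → Matrix (Fin μ) (Fin μ) F) (t r c : ℕ)
    (hc : c < t * μ) (hr : (t + 1) * μ ≤ r) : auxD μ hμ S r c = 0 := by
  have h1 : c / μ < t := (Nat.div_lt_iff_lt_mul hμ).2 hc
  have h2 : t + 1 ≤ r / μ := (Nat.le_div_iff_mul_le hμ).2 hr
  unfold auxD
  rw [if_neg (by omega), if_neg (by omega), if_neg (by omega)]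

lemma auxD_down (μ : ℕ) (hμ : 0 < μ) (S : ℕ → Matrix (Fin μ) (Fin μ) F) (t c x : ℕ)
    (hc : c < μ) (hx : x < (t + 1) * μ) :
    auxD μ hμ S ((t + 1) * μ + c) x =
      if h : t * μ ≤ x then
        S (2 * (t + 1)) ⟨c, hc⟩ ⟨x - t * μ, by rw [Nat.succ_mul] at hx; omega⟩ else 0 := by
  have h1 : ((t + 1) * μ + c) / μ = t + 1 := by
    rw [Nat.add_comm, Nat.add_mul_div_right _ _ hμ, Nat.div_eq_of_lt hc, zero_add]
  have h3 : ((t + 1) * μ + c) % μ = c := by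
    rw [Nat.add_comm, Nat.add_mul_mod_self_right, Nat.mod_eq_of_lt hc]
  have h2 : x / μ < t + 1 := (Nat.div_lt_iff_lt_mul hμ).2 hx
  unfold auxD
  simp only [h1, h3]
  rw [if_neg (by omega), if_neg (by omega)]
  by_cases h : t * μ ≤ x
  · have h4 : x / μ = t := by
      have := (Nat.le_div_iff_mul_le hμ).2 h
      omega
    have h5 : x % μ = x - t * μ := by
      have := Nat.div_add_mod x μ
      rw [h4, Nat.mul_comm] at this; omega
    rw [dif_pos h, if_pos (by omega)]
    simp only [h4, h5]; rfl
  · have h4 : x / μ < t := (Nat.div_lt_iff_lt_mul hμ).2 (by omega)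
    rw [dif_neg h, if_neg (by omega)]

lemma aux_split (μ : ℕ) (hμ : 0 < μ) (S : ℕ → Matrix (Fin μ) (Fin μ) F) (p m s a : ℕ)
    (ha : a < m * μ) (y : F) :
    ∑ r : Fin ((p + 1 + m + s + 1) * μ), y ^ (r.val + 1) * auxD μ hμ S r.val ((p + 1) * μ + a)
    = (∑ c : Fin μ, y ^ (p * μ + c.val + 1) *
          (if h : a < μ then S (2 * (p + 1)) c ⟨a, h⟩ else 0))
      + ∑ r : Fin ((m + 1) * μ), y ^ ((p + 1) * μ + r.val + 1) *
          auxD μ hμ S ((p + 1) * μ + r.val) ((p + 1) * μ + a) := by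
  have e1 : (p + 1 + m + s + 1) * μ = p * μ + (μ + ((m + 1) * μ + s * μ)) := by ring
  rw [Fin.sum_univ_eq_sum_range (fun r => y ^ (r + 1) * auxD μ hμ S r ((p + 1) * μ + a)),
    e1, Finset.sum_range_add, Finset.sum_range_add, Finset.sum_range_add,
    Finset.sum_eq_zero (s := range (p * μ)), Finset.sum_eq_zero (s := range (s * μ)),
    zero_add, add_zero]
  · congr 1
    · rw [← Fin.sum_univ_eq_sum_range
        (fun c => y ^ (p * μ + c + 1) * auxD μ hμ S (p * μ + c) ((p + 1) * μ + a))]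
      refine Finset.sum_congr rfl fun c _ => ?_
      rw [auxD_up _ _ _ _ _ _ c.isLt]
    · rw [← Fin.sum_univ_eq_sum_range (fun c => y ^ (p * μ + (μ + c) + 1) *
        auxD μ hμ S (p * μ + (μ + c)) ((p + 1) * μ + a))]
      refine Finset.sum_congr rfl fun c _ => ?_
      have : p * μ + (μ + c.val) = (p + 1) * μ + c.val := by ring
      rw [this]
  · intro x _
    rw [auxD_high μ hμ S (p + 1 + m), mul_zero]
    · rw [Nat.add_mul (p + 1) m]; omega
    · have : p * μ + (μ + ((m + 1) * μ + x)) = (p + 1 + m + 1) * μ + x := by ring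
      omega
  · intro x hx
    rw [auxD_low _ _ _ _ _ _ (Finset.mem_range.1 hx), mul_zero]

end Aux

/-- for every `2 ≤ i ≤ β = z/m`, the column vector `Υ_H(i)` of `i`-th repair
symbols satisfies
`Υ_H(i) - W_i ⬝ S_{2(i-1)m} ⬝ (e_f^{(i-1)mμ} φ_f)ᵀ = Ω_H(i) ⬝ N_i ⬝ (ψ_f(i))ᵀ`,
where the row of `W_i` for helper `ℓ r` is `e_{ℓ r}^{(i-1)mμ-μ} φ_{ℓ r}` and `N_i` is the
`d × mμ` matrix with top rows `M_i` and bottom block row `[O, …, O, S_{2im}]`. -/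
theorem repair_vector_eq_stepi {F : Type*} [Field F] (μ z m n : ℕ) (hμ : 0 < μ)
    (hz : 0 < z) (hm : 0 < m) (hdvd : m ∣ z) (hn : 0 < n)
    (e : Fin n → F) (he : ∀ j, e j ≠ 0) (heinj : Function.Injective e)
    (S : ℕ → Matrix (Fin μ) (Fin μ) F) (hS : ∀ t, 1 ≤ t → t ≤ 2 * z → (S t).IsSymm)
    (f : Fin n) (ℓ : Fin ((m + 1) * μ) → Fin n) (hℓ : Function.Injective ℓ) :
    ∀ i, ∀ hi2 : 2 ≤ i, ∀ hiz : i ≤ z / m,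
    (fun r : Fin ((m + 1) * μ) =>
        repairSym z μ m i hμ hm (by omega) hiz hdvd S (e (ℓ r)) (e f))
      - Matrix.mulVec
          (Matrix.of fun (r : Fin ((m + 1) * μ)) (c : Fin μ) =>
            e (ℓ r) ^ ((i - 1) * (m * μ) - μ) * phiVec μ (e (ℓ r)) c)
          (Matrix.mulVec (S (2 * (i - 1) * m))
            (fun a => e f ^ ((i - 1) * (m * μ)) * phiVec μ (e f) a))
      = Matrix.mulVec
          (OmegaMat n μ m i e ℓ *
            Nmat μ m hm (subM z μ m i hμ hm (by omega) hiz hdvd S) (S (2 * i * m)))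
          (psiSeg m μ i (e f)) := by
  intro i hi2 hiz
  obtain ⟨s, p, hz', hp⟩ : ∃ s p, z = p + 1 + m + s ∧ (i - 1) * m = p + 1 := by
    obtain ⟨t, rfl⟩ := hdvd
    rw [Nat.mul_div_cancel_left t hm] at hiz
    obtain ⟨j, rfl⟩ := Nat.exists_eq_add_of_le hi2
    obtain ⟨k, rfl⟩ := Nat.exists_eq_add_of_le hiz
    obtain ⟨m', rfl⟩ := Nat.exists_eq_add_of_le hm
    refine ⟨(1 + m') * k, (1 + j) * (1 + m') - 1, ?_, ?_⟩
    · have : 1 ≤ (1 + j) * (1 + m') := Nat.mul_pos (by omega) (by omega)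
      rw [Nat.sub_add_cancel this]; ring
    · have : 1 ≤ (1 + j) * (1 + m') := Nat.mul_pos (by omega) (by omega)
      rw [Nat.sub_add_cancel this]
      congr 1; omega
  have hK : (i - 1) * (m * μ) = (p + 1) * μ := by rw [← Nat.mul_assoc, hp]
  have hK' : (i - 1) * (m * μ) - μ = p * μ := by rw [hK, Nat.succ_mul]; omega
  have hS1 : 2 * (i - 1) * m = 2 * (p + 1) := by rw [Nat.mul_assoc, hp]
  have hS2 : 2 * i * m = 2 * (p + 1 + m) := by
    rw [← hp, Nat.mul_assoc]
    obtain ⟨j, rfl⟩ := Nat.exists_eq_add_of_le hi2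
    have : 2 + j - 1 = 1 + j := by omega
    rw [this]; ring
  have hN : ∀ (r : Fin ((m + 1) * μ)) (a : Fin (m * μ)),
      Nmat μ m hm (subM z μ m i hμ hm (by omega) hiz hdvd S) (S (2 * i * m)) r a
        = auxD μ hμ S ((p + 1) * μ + r.val) ((p + 1) * μ + a.val) := by
    intro r a
    unfold Nmat
    rw [Matrix.of_apply]
    by_cases h : r.val < m * μ
    · rw [dif_pos h, ← hK]; rfl
    · rw [dif_neg h]
      obtain ⟨m', rfl⟩ : ∃ m', m = m' + 1 := ⟨m - 1, by omega⟩
      have hr : (p + 1) * μ + r.val = (p + 1 + m' + 1) * μ + (r.val - (m' + 1) * μ) := by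
        have : (p + 1 + m' + 1) * μ = (p + 1) * μ + (m' + 1) * μ := by ring
        omega
      have ha := a.isLt
      have e1 : (p + 1 + m' + 1) * μ = (p + 1) * μ + (m' + 1) * μ := by ring
      have e2 : (p + 1 + m') * μ = (p + 1) * μ + m' * μ := by ring
      rw [hr, auxD_down μ hμ S (p + 1 + m') _ _ (nmat_aux1 r.isLt h) (by omega)]
      by_cases h2 : m' * μ ≤ a.val
      · rw [dif_pos (by simpa using h2), dif_pos (by omega), hS2]
        congr 2
        simp only [Nat.add_sub_cancel]
        omega
      · rw [dif_neg (by simpa using h2), dif_neg (by omega)]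
  have hx : ∀ (y : F) (a : Fin (m * μ)),
      xSeg z μ m i hμ hm (by omega) hiz hdvd S y a
      = (∑ c : Fin μ, y ^ (p * μ + c.val + 1) *
          (if h : a.val < μ then S (2 * (p + 1)) c ⟨a, h⟩ else 0))
      + ∑ r : Fin ((m + 1) * μ), y ^ ((p + 1) * μ + r.val + 1) *
          auxD μ hμ S ((p + 1) * μ + r.val) ((p + 1) * μ + a.val) := by
    intro y a
    rw [← aux_split μ hμ S p m s a.val a.isLt y]
    subst hz'
    rw [← hK]
    rfl
  have hμm : μ ≤ m * μ := Nat.le_mul_of_pos_left _ hm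
  ext r
  rw [Pi.sub_apply, sub_eq_iff_eq_add, ← Matrix.mulVec_mulVec]
  simp only [repairSym, hx, add_mul, Finset.sum_add_distrib, Matrix.mulVec, dotProduct,
    Matrix.of_apply, OmegaMat, hN, psiSeg, phiVec]
  rw [hK', hS1, hK, add_comm]
  congr 1
  · simp only [Finset.sum_mul, Finset.mul_sum]
    rw [Finset.sum_comm]
    simp only [mul_assoc, add_mul]
  · simp only [Finset.sum_mul, Finset.mul_sum]
    rw [Finset.sum_comm]
    refine Finset.sum_congr rfl fun c _ => ?_
    obtain ⟨k, hk⟩ := Nat.exists_eq_add_of_le hμm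
    rw [← (finCongr hk.symm).sum_comp, Fin.sum_univ_add]
    simp [pow_add]
    refine Finset.sum_congr rfl fun b _ => ?_
    ring
end

section
/- Let F be a field, μ ≥ 1, z ≥ 1, n ≥ 1, with pairwise distinct nonzero elements e_1, …, e_n of F, let m ≥ 1 divide z, set d = (m+1)μ and β = z/m, and let M be the data matrix built from symmetric μ × μ matrices S_1, …, S_{2z}. For any node index f, the first mμ entries of x_f = ψ_f M satisfy x_f(1) = ψ_f(1) M_1 + [0, …, 0, e_f^{mμ} φ_f S_{2m}], where the zero padding has length (m−1)μ; that is, the i = 1 segment of the stored content decomposes as the product of ψ_f(1) with the symmetric diagonal submatrix M_1 plus a term supported on the last μ coordinates given by e_f^{mμ} φ_f S_{2m}. -/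
open Matrix Finset

/-- for any node `f`, the first `mμ` entries of `x_f = ψ_f M` decompose as
`x_f(1) = ψ_f(1) M₁ + [0, …, 0, e_f^{mμ} φ_f S_{2m}]`, where the zero padding has length
`(m-1)μ` and `M₁` is the symmetric leading `mμ × mμ` diagonal submatrix of `M`. -/
theorem stored_first_segment_decomposition {F : Type*} [Field F] (μ z m n : ℕ)
    (hμ : 0 < μ) (hz : 0 < z) (hm : 0 < m) (hdvd : m ∣ z) (hn : 0 < n)
    (e : Fin n → F) (he : ∀ j, e j ≠ 0) (heinj : Function.Injective e)
    (S : ℕ → Matrix (Fin μ) (Fin μ) F) (hS : ∀ t, 1 ≤ t → t ≤ 2 * z → (S t).IsSymm)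
    (f : Fin n) :
    let h1z : 1 ≤ z / m := (Nat.one_le_div_iff hm).mpr (Nat.le_of_dvd hz hdvd)
    ∀ a : Fin (m * μ),
      xSeg z μ m 1 hμ hm (le_refl 1) h1z hdvd S (e f) a
        = Matrix.vecMul (psiSeg m μ 1 (e f)) (subM z μ m 1 hμ hm (le_refl 1) h1z hdvd S) a
          + if h2 : (m - 1) * μ ≤ a.val then
              e f ^ (m * μ) *
                Matrix.vecMul (phiVec μ (e f)) (S (2 * m))
                  ⟨a.val - (m - 1) * μ, nmat_aux2 hm a.isLt h2⟩
            else 0 := by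
  intro h1z a
  obtain ⟨a, ha⟩ := a
  obtain ⟨k, rfl⟩ : ∃ k, m = k + 1 := ⟨m - 1, by omega⟩
  have hle : k + 1 ≤ z := Nat.le_of_dvd hz hdvd
  obtain ⟨w, rfl⟩ := Nat.exists_eq_add_of_le hle
  let D : ℕ → F := fun r =>
    if r / μ = a / μ then
      S (2 * (a / μ) + 1) ⟨r % μ, Nat.mod_lt _ hμ⟩ ⟨a % μ, Nat.mod_lt _ hμ⟩
    else if r / μ + 1 = a / μ then
      S (2 * (r / μ) + 2) ⟨r % μ, Nat.mod_lt _ hμ⟩ ⟨a % μ, Nat.mod_lt _ hμ⟩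
    else if r / μ = a / μ + 1 then
      S (2 * (a / μ) + 2) ⟨r % μ, Nat.mod_lt _ hμ⟩ ⟨a % μ, Nat.mod_lt _ hμ⟩
    else 0
  let G : ℕ → F := fun r => e f ^ (r + 1) * D r
  have haq : a / μ < k + 1 := Nat.div_lt_of_lt_mul (by rwa [mul_comm] at ha)
  have hL : xSeg (k + 1 + w) μ (k + 1) 1 hμ hm (le_refl 1) h1z hdvd S (e f) ⟨a, ha⟩
      = ∑ r ∈ Finset.range ((k + 1 + w + 1) * μ), G r := by
    rw [← Fin.sum_univ_eq_sum_range]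
    simp [xSeg, stored, Matrix.vecMul, dotProduct, psiVec, dataMatrix, G, D]
  have hR : Matrix.vecMul (psiSeg (k + 1) μ 1 (e f))
      (subM (k + 1 + w) μ (k + 1) 1 hμ hm (le_refl 1) h1z hdvd S) ⟨a, ha⟩
      = ∑ r ∈ Finset.range ((k + 1) * μ), G r := by
    rw [← Fin.sum_univ_eq_sum_range]
    simp [subM, Matrix.vecMul, dotProduct, psiSeg, dataMatrix, G, D]
  have hsz : (k + 1 + w + 1) * μ = (k + 1) * μ + (μ + w * μ) := by ring
  rw [hL, hR, hsz, Finset.sum_range_add, Finset.sum_range_add]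
  have hz0 : ∑ x ∈ Finset.range (w * μ), G ((k + 1) * μ + (μ + x)) = 0 := by
    apply Finset.sum_eq_zero
    intro x _
    have : ((k + 1) * μ + (μ + x)) / μ = k + 2 + x / μ := by
      rw [show (k + 1) * μ + (μ + x) = x + μ * (k + 2) by ring, Nat.add_mul_div_left _ _ hμ]
      omega
    simp only [G, D, this]
    generalize x / μ = q
    generalize a / μ = p at haq ⊢
    rw [if_neg (by omega), if_neg (by omega), if_neg (by omega), mul_zero]
  rw [hz0, add_zero]
  congr 1
  rw [← Fin.sum_univ_eq_sum_range (fun x => G ((k + 1) * μ + x))]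
  have hd : ∀ x : Fin μ, ((k + 1) * μ + x.val) / μ = k + 1 := fun x => by
    rw [add_comm, Nat.add_mul_div_right _ _ hμ, Nat.div_eq_of_lt x.isLt]; omega
  have hmod : ∀ x : Fin μ, ((k + 1) * μ + x.val) % μ = x.val := fun x => by
    rw [add_comm, Nat.add_mul_mod_self_right, Nat.mod_eq_of_lt x.isLt]
  simp only [Nat.add_sub_cancel]
  split_ifs with h2
  · have hak : a / μ = k := by
      have := (Nat.le_div_iff_mul_le hμ).mpr h2
      omega
    have ham : a % μ = a - k * μ := by
      have := Nat.div_add_mod a μ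
      rw [hak, mul_comm] at this
      omega
    simp only [Matrix.vecMul, dotProduct, phiVec, Finset.mul_sum]
    apply Finset.sum_congr rfl
    intro x _
    simp only [G, D, hd, hmod, hak, ham]
    rw [if_neg (by omega), if_neg (by omega), if_pos trivial]
    rw [add_assoc, pow_add, mul_assoc]
    rfl
  · apply Finset.sum_eq_zero
    intro x _
    have hak : a / μ < k := by
      by_contra hc
      exact h2 ((Nat.le_div_iff_mul_le hμ).mp (by omega))
    simp only [G, D, hd]
    rw [if_neg (by omega), if_neg (by omega), if_neg (by omega), mul_zero]
end
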